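/- For q ≥ 1, d ≥ 1 and complex z, w with Re(z) > (d/2)(q-1) and Re(w) > (d/2)(q-1), the beta function of the cone of q×q real symmetric positive definite matrices (case d = 1) satisfies B_Ω(z,w) = Γ_Ω(z)Γ_Ω(w)/Γ_Ω(z+w), where B_Ω(z,w) = ∫_{0<x<I} det(x)^{z-(q+1)/2} det(I-x)^{w-(q+1)/2} dx. -/

import Mathlib

open MeasureTheory Matrix Complex

variable (q : ℕ)

/-- Index set for the independent entries of a symmetric `q×q` matrix. -/
abbrev SymIdx (q : ℕ) := {p : Fin q × Fin q // p.1 ≤ p.2}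

/-- The symmetric matrix determined by its upper-triangular entries. -/
def symOfFun (f : SymIdx q → ℝ) : Matrix (Fin q) (Fin q) ℝ := fun i j =>
  if h : i ≤ j then f ⟨(i, j), h⟩ else f ⟨(j, i), (not_le.mp h).le⟩

instance : MeasurableSpace (Matrix (Fin q) (Fin q) ℝ) :=
  inferInstanceAs (MeasurableSpace ((Fin q) → (Fin q) → ℝ))

/-- Lebesgue measure on the space of real symmetric `q×q` matrices, realized as the
pushforward of Lebesgue measure on the coordinates. -/
noncomputable def symMeasure : Measure (Matrix (Fin q) (Fin q) ℝ) :=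
  Measure.map (symOfFun q) volume

/-- The gamma function of the cone `Ω` of positive definite real symmetric matrices,
`Γ_Ω(z) = ∫_Ω e^{-tr x} det(x)^{z-(q+1)/2} dx`. -/
noncomputable def GammaOmega (z : ℂ) : ℂ :=
  ∫ x in {x : Matrix (Fin q) (Fin q) ℝ | x.PosDef},
    Complex.exp (-(x.trace : ℂ)) * ((x.det : ℝ) : ℂ) ^ (z - ((q : ℂ) + 1) / 2) ∂(symMeasure q)

/-- The beta function of the cone,
`B_Ω(z,w) = ∫_{0<x<I} det(x)^{z-(q+1)/2} det(I-x)^{w-(q+1)/2} dx`. -/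
noncomputable def BetaOmega (z w : ℂ) : ℂ :=
  ∫ x in {x : Matrix (Fin q) (Fin q) ℝ | x.PosDef ∧ (1 - x).PosDef},
    ((x.det : ℝ) : ℂ) ^ (z - ((q : ℂ) + 1) / 2) *
      (((1 - x).det : ℝ) : ℂ) ^ (w - ((q : ℂ) + 1) / 2) ∂(symMeasure q)

section Basics

theorem symOfFun_symm (f : SymIdx q → ℝ) (i j : Fin q) :
    symOfFun q f i j = symOfFun q f j i := by
  unfold symOfFun
  rcases lt_trichotomy i j with h | h | h
  · simp [h.le, not_le.mpr h]
  · subst h; rfl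
  · simp [h.le, not_le.mpr h]

theorem symOfFun_transpose (f : SymIdx q → ℝ) : (symOfFun q f)ᵀ = symOfFun q f := by
  ext i j; exact symOfFun_symm q f j i

theorem symOfFun_herm (f : SymIdx q → ℝ) : (symOfFun q f).IsHermitian := by
  ext i j; simp [symOfFun_symm q f j i]

/-- `symOfFun` as a linear map. -/
def symLin : (SymIdx q → ℝ) →ₗ[ℝ] Matrix (Fin q) (Fin q) ℝ where
  toFun := symOfFun q
  map_add' f g := by
    ext i j; simp only [symOfFun, Matrix.add_apply]; split_ifs <;> rfl
  map_smul' c f := by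
    ext i j; simp only [symOfFun, Matrix.smul_apply]; split_ifs <;> rfl

/-- upper triangular coordinates -/
def symCoord : Matrix (Fin q) (Fin q) ℝ →ₗ[ℝ] (SymIdx q → ℝ) where
  toFun x := fun p => x p.1.1 p.1.2
  map_add' _ _ := rfl
  map_smul' _ _ := rfl

theorem symCoord_symOfFun (f : SymIdx q → ℝ) : symCoord q (symOfFun q f) = f := by
  ext ⟨⟨i, j⟩, h⟩
  simp only [symCoord, LinearMap.coe_mk, AddHom.coe_mk, symOfFun]
  exact dif_pos h

theorem symOfFun_symCoord (x : Matrix (Fin q) (Fin q) ℝ) (hx : xᵀ = x) :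
    symOfFun q (symCoord q x) = x := by
  ext i j
  simp only [symCoord, LinearMap.coe_mk, AddHom.coe_mk, symOfFun]
  split_ifs
  · rfl
  · exact congrFun (congrFun hx i) j

theorem symOfFun_sub (f g : SymIdx q → ℝ) :
    symOfFun q (f - g) = symOfFun q f - symOfFun q g := (symLin q).map_sub f g

theorem measurable_symOfFun_apply (i j : Fin q) :
    Measurable (fun f : SymIdx q → ℝ => symOfFun q f i j) := by
  unfold symOfFun; split_ifs <;> fun_prop

theorem continuous_symOfFun : Continuous (symOfFun q) := by
  refine continuous_matrix fun i j => ?_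
  unfold symOfFun; split_ifs <;> fun_prop

theorem measurable_symOfFun : Measurable (symOfFun q) := by
  refine measurable_pi_lambda _ fun i => measurable_pi_lambda _ fun j => ?_
  exact measurable_symOfFun_apply q i j

theorem measurable_symCoord : Measurable (symCoord q) := by
  refine measurable_pi_lambda _ fun p => ?_
  exact (measurable_pi_apply (p.1.2)).comp
    (measurable_pi_apply (X := fun _ : Fin q => Fin q → ℝ) (p.1.1))

theorem measurableSet_symm : MeasurableSet (Set.range (symOfFun q)) := by
  have : Set.range (symOfFun q) = ⋂ i : Fin q, ⋂ j : Fin q,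
      {x : Matrix (Fin q) (Fin q) ℝ | x i j = x j i} := by
    ext x
    simp only [Set.mem_range, Set.mem_iInter, Set.mem_ofPred_eq]
    constructor
    · rintro ⟨f, rfl⟩ i j; exact symOfFun_symm q f i j
    · intro h
      exact ⟨symCoord q x, symOfFun_symCoord q x (by ext i j; exact h j i)⟩
  rw [this]
  refine MeasurableSet.iInter fun i => MeasurableSet.iInter fun j => ?_
  have h : ∀ i j : Fin q, Measurable (fun x : Matrix (Fin q) (Fin q) ℝ => x i j) := fun i j =>
    (measurable_pi_apply j).comp (measurable_pi_apply (X := fun _ : Fin q => Fin q → ℝ) i)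
  exact measurableSet_eq_fun (h i j) (h j i)

theorem measurableEmbedding_symOfFun : MeasurableEmbedding (symOfFun q) :=
  MeasurableEmbedding.of_measurable_inverse (measurable_symOfFun q) (measurableSet_symm q)
    (measurable_symCoord q) (symCoord_symOfFun q)

theorem measurableSet_posDef : MeasurableSet {f : SymIdx q → ℝ | (symOfFun q f).PosDef} := by
  have : {f : SymIdx q → ℝ | (symOfFun q f).PosDef} =
      {f | ∀ v : Fin q → ℝ, 0 ≤ v ⬝ᵥ (symOfFun q f *ᵥ v)} ∩ {f | (symOfFun q f).det ≠ 0} := by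
    ext f
    simp only [Set.mem_ofPred_eq, Set.mem_inter_iff]
    constructor
    · intro h
      refine ⟨fun v => ?_, h.det_pos.ne'⟩
      simpa using h.posSemidef.dotProduct_mulVec_nonneg v
    · rintro ⟨h1, h2⟩
      have : (symOfFun q f).PosSemidef :=
        PosSemidef.of_dotProduct_mulVec_nonneg (symOfFun_herm q f) (by simpa using h1)
      exact this.posDef_iff_det_ne_zero.mpr h2
  rw [this]
  have hc := continuous_symOfFun q
  refine MeasurableSet.inter ?_ ?_
  · rw [Set.ofPred_forall]
    refine IsClosed.measurableSet (isClosed_iInter fun v => ?_)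
    exact isClosed_le continuous_const
      (continuous_const.dotProduct (hc.matrix_mulVec continuous_const))
  · exact (isOpen_ne_fun hc.matrix_det continuous_const).measurableSet

theorem setIntegral_symMeasure (s : Set (Matrix (Fin q) (Fin q) ℝ))
    (g : Matrix (Fin q) (Fin q) ℝ → ℂ) :
    ∫ x in s, g x ∂(symMeasure q) = ∫ f in symOfFun q ⁻¹' s, g (symOfFun q f) := by
  unfold symMeasure
  exact (measurableEmbedding_symOfFun q).setIntegral_map g s

/-- The integrand of the gamma function, in coordinates. -/
noncomputable def gamF (z : ℂ) : (SymIdx q → ℝ) → ℂ :=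
  {f : SymIdx q → ℝ | (symOfFun q f).PosDef}.indicator fun f =>
    Complex.exp (-((symOfFun q f).trace : ℂ)) *
      (((symOfFun q f).det : ℝ) : ℂ) ^ (z - ((q : ℂ) + 1) / 2)

theorem GammaOmega_eq (z : ℂ) : GammaOmega q z = ∫ f, gamF q z f := by
  unfold GammaOmega gamF
  rw [setIntegral_symMeasure, integral_indicator (measurableSet_posDef q)]
  rfl

theorem measurable_gamF (z : ℂ) : Measurable (gamF q z) := by
  refine Measurable.indicator ?_ (measurableSet_posDef q)
  have hc := continuous_symOfFun q
  have h1 : Measurable fun f : SymIdx q → ℝ => (symOfFun q f).trace :=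
    hc.matrix_trace.measurable
  have h2 : Measurable fun f : SymIdx q → ℝ => (symOfFun q f).det :=
    hc.matrix_det.measurable
  fun_prop

end Basics

section Jacobian

theorem congr_symm (A : Matrix (Fin q) (Fin q) ℝ) (f : SymIdx q → ℝ) :
    (A * symOfFun q f * Aᵀ)ᵀ = A * symOfFun q f * Aᵀ := by
  simp [Matrix.transpose_mul, symOfFun_transpose, Matrix.mul_assoc]

/-- congruence action on coordinates -/
def conjLin (A : Matrix (Fin q) (Fin q) ℝ) : (SymIdx q → ℝ) →ₗ[ℝ] (SymIdx q → ℝ) where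
  toFun f := symCoord q (A * symOfFun q f * Aᵀ)
  map_add' f g := by
    rw [← map_add]; congr 1
    rw [show symOfFun q (f + g) = symOfFun q f + symOfFun q g from (symLin q).map_add f g]
    rw [Matrix.mul_add, Matrix.add_mul]
  map_smul' c f := by
    rw [← map_smul]; congr 1
    rw [show symOfFun q (c • f) = c • symOfFun q f from (symLin q).map_smul c f]
    simp

theorem conjLin_apply (A : Matrix (Fin q) (Fin q) ℝ) (f : SymIdx q → ℝ) :
    conjLin q A f = symCoord q (A * symOfFun q f * Aᵀ) := rfl

theorem symOfFun_conjLin (A : Matrix (Fin q) (Fin q) ℝ) (f : SymIdx q → ℝ) :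
    symOfFun q (conjLin q A f) = A * symOfFun q f * Aᵀ :=
  symOfFun_symCoord q _ (congr_symm q A f)

theorem conjLin_mul (A B : Matrix (Fin q) (Fin q) ℝ) :
    conjLin q (A * B) = conjLin q A ∘ₗ conjLin q B := by
  refine LinearMap.ext fun f => ?_
  rw [LinearMap.comp_apply, conjLin_apply, conjLin_apply, symOfFun_conjLin]
  simp [Matrix.mul_assoc, Matrix.transpose_mul]

theorem conjLin_one : conjLin q 1 = LinearMap.id := by
  refine LinearMap.ext fun f => ?_
  rw [conjLin_apply]
  simp [symCoord_symOfFun]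

theorem det_conjLin_mul (A B : Matrix (Fin q) (Fin q) ℝ) :
    LinearMap.det (conjLin q (A * B)) = LinearMap.det (conjLin q A) * LinearMap.det (conjLin q B) := by
  rw [conjLin_mul, LinearMap.det_comp]

theorem prod_symIdx (d : Fin q → ℝ) :
    ∏ p : SymIdx q, d p.1.1 * d p.1.2 = (∏ i, d i) ^ (q + 1) := by
  classical
  have h1 : ∏ p : SymIdx q, d p.1.1 * d p.1.2
      = ∏ i : Fin q, ∏ j : Fin q, if i ≤ j then d i * d j else 1 := by
    rw [← Finset.prod_product', Finset.univ_product_univ, ← Finset.prod_filter]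
    exact (Finset.prod_subtype (Finset.univ.filter fun p : Fin q × Fin q => p.1 ≤ p.2)
      (by simp) (fun p => d p.1 * d p.2)).symm
  rw [h1]
  have h2 : ∀ i j : Fin q, (if i ≤ j then d i * d j else 1)
      = (if i ≤ j then d i else 1) * (if i ≤ j then d j else 1) := by
    intro i j; split_ifs <;> simp
  simp_rw [h2, Finset.prod_mul_distrib]
  rw [Finset.prod_comm (f := fun i j => if i ≤ j then d j else 1), ← Finset.prod_mul_distrib,
    ← Finset.prod_pow]
  refine Finset.prod_congr rfl fun i _ => ?_
  rw [← Finset.prod_filter, ← Finset.prod_filter, Finset.prod_const, Finset.prod_const, ← pow_add]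
  congr 1
  have h3 : (Finset.univ.filter fun j => i ≤ j) = Finset.Ici i := by ext; simp
  have h4 : (Finset.univ.filter fun j => j ≤ i) = Finset.Iic i := by ext; simp
  rw [h3, h4, Fin.card_Ici, Fin.card_Iic]
  omega

theorem det_conjLin_diagonal (d : Fin q → ℝ) :
    LinearMap.det (conjLin q (Matrix.diagonal d)) = (∏ i, d i) ^ (q + 1) := by
  rw [← prod_symIdx, ← Matrix.det_diagonal, ← LinearMap.det_toLin']
  congr 1
  refine LinearMap.ext fun f => ?_
  ext p
  change (Matrix.diagonal d * symOfFun q f * (Matrix.diagonal d)ᵀ) p.1.1 p.1.2 = _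
  have := congrFun (symCoord_symOfFun q f) p
  change symOfFun q f p.1.1 p.1.2 = f p at this
  simp [Matrix.diagonal_transpose, Matrix.mulVec_diagonal, this]
  ring

theorem det_conjLin_transvection (t : Matrix.TransvectionStruct (Fin q) ℝ) :
    LinearMap.det (conjLin q t.toMatrix) = 1 := by
  classical
  obtain ⟨i, j, hij, c⟩ := t
  simp only [Matrix.TransvectionStruct.toMatrix_mk]
  set T := Matrix.transvection i j c
  set D : Matrix (Fin q) (Fin q) ℝ := Matrix.diagonal (fun k => if k = i then 2 else 1)
  have hD : ∀ a, D * Matrix.transvection i j a = Matrix.transvection i j (2 * a) * D := by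
    intro a
    simp only [Matrix.transvection, Matrix.mul_add, Matrix.add_mul, Matrix.mul_one, Matrix.one_mul]
    congr 1
    ext k l
    simp only [D, Matrix.diagonal_mul, Matrix.mul_diagonal, Matrix.single_apply]
    by_cases hk : i = k
    · by_cases hl : j = l
      · subst hk; subst hl; simp [hij.symm]
      · simp [hl]
    · simp [hk]
  have hT : T * T = Matrix.transvection i j (2 * c) := by
    rw [Matrix.transvection_mul_transvection_same i j hij, two_mul]
  have h1 := congrArg (fun M => LinearMap.det (conjLin q M)) (hD c)
  simp only [det_conjLin_mul] at h1
  rw [← hT, det_conjLin_mul] at h1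
  have hD0 : LinearMap.det (conjLin q D) ≠ 0 := by
    rw [det_conjLin_diagonal]
    refine pow_ne_zero _ (Finset.prod_ne_zero_iff.mpr fun k _ => ?_)
    split_ifs <;> norm_num
  have hT0 : LinearMap.det (conjLin q T) ≠ 0 := by
    intro h0
    have h2 : T * Matrix.transvection i j (-c) = 1 := by
      rw [Matrix.transvection_mul_transvection_same i j hij]; simp
    have h3 := det_conjLin_mul q T (Matrix.transvection i j (-c))
    rw [h2, h0, conjLin_one, LinearMap.det_id] at h3
    simp at h3
  change LinearMap.det (conjLin q T) = 1
  have h4 : LinearMap.det (conjLin q T) * LinearMap.det (conjLin q D) * 1 =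
    LinearMap.det (conjLin q T) * LinearMap.det (conjLin q D) * LinearMap.det (conjLin q T) := by
    change LinearMap.det (conjLin q D) * LinearMap.det (conjLin q T) = _ at h1
    linear_combination h1
  exact (mul_left_cancel₀ (mul_ne_zero hT0 hD0) h4).symm

theorem det_conjLin (A : Matrix (Fin q) (Fin q) ℝ) (hA : A.det ≠ 0) :
    LinearMap.det (conjLin q A) = A.det ^ (q + 1) := by
  refine Matrix.diagonal_transvection_induction_of_det_ne_zero
    (fun A => LinearMap.det (conjLin q A) = A.det ^ (q + 1)) A hA ?_ ?_ ?_
  · intro d _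
    rw [det_conjLin_diagonal, Matrix.det_diagonal]
  · intro t
    rw [det_conjLin_transvection, Matrix.TransvectionStruct.det, one_pow]
  · intro A B _ _ h1 h2
    rw [det_conjLin_mul, h1, h2, Matrix.det_mul, mul_pow]

end Jacobian

section Beta

theorem integral_conjLin (A : Matrix (Fin q) (Fin q) ℝ) (hA : A.det ≠ 0)
    (g : (SymIdx q → ℝ) → ℂ) (hg : Measurable g) :
    ∫ f, g f = ((|A.det| ^ (q + 1) : ℝ) : ℂ) * ∫ f, g (conjLin q A f) := by
  have hd := det_conjLin q A hA
  have hd0 : LinearMap.det (conjLin q A) ≠ 0 := by rw [hd]; exact pow_ne_zero _ hA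
  have hm := Measure.map_linearMap_addHaar_eq_smul_addHaar
    (volume : Measure (SymIdx q → ℝ)) hd0
  have hmeas : Measurable (conjLin q A) :=
    (LinearMap.continuous_of_finiteDimensional (conjLin q A)).measurable
  have h1 : ∫ f, g f ∂(Measure.map (conjLin q A) volume) = ∫ f, g (conjLin q A f) :=
    integral_map hmeas.aemeasurable hg.aestronglyMeasurable
  rw [← h1, hm, integral_smul_measure, hd, abs_inv, abs_pow,
    ENNReal.toReal_ofReal (by positivity)]
  have : ((|A.det| ^ (q + 1) : ℝ) : ℂ) ≠ 0 := by
    exact_mod_cast pow_ne_zero _ (abs_ne_zero.mpr hA)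
  rw [Complex.real_smul, ← mul_assoc, Complex.ofReal_inv, mul_inv_cancel₀ this, one_mul]

open scoped MatrixOrder Matrix.Norms.L2Operator in
theorem exists_factor {u : Matrix (Fin q) (Fin q) ℝ} (hu : u.PosDef) :
    ∃ A : Matrix (Fin q) (Fin q) ℝ, u = A * Aᵀ ∧ A.det ≠ 0 := by
  obtain ⟨y, hy⟩ := CStarAlgebra.nonneg_iff_eq_star_mul_self.mp hu.posSemidef.nonneg
  refine ⟨yᵀ, by simpa [star_eq_conjTranspose] using hy, fun h => ?_⟩
  have := hu.det_pos
  rw [hy, Matrix.det_mul] at this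
  rw [Matrix.det_transpose] at h
  simp [h] at this

theorem posDef_congr (A v : Matrix (Fin q) (Fin q) ℝ) (hA : A.det ≠ 0) :
    (A * v * Aᵀ).PosDef ↔ v.PosDef := by
  have hu : IsUnit A := (Matrix.isUnit_iff_isUnit_det A).mpr hA.isUnit
  have := Matrix.IsUnit.posDef_star_right_conjugate_iff (x := v) hu
  simpa [star_eq_conjTranspose] using this

/-- The integrand of the beta function, in coordinates. -/
noncomputable def betF (z w : ℂ) : (SymIdx q → ℝ) → ℂ :=
  {f : SymIdx q → ℝ | (symOfFun q f).PosDef ∧ (1 - symOfFun q f).PosDef}.indicator fun f =>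
    (((symOfFun q f).det : ℝ) : ℂ) ^ (z - ((q : ℂ) + 1) / 2) *
      (((1 - symOfFun q f).det : ℝ) : ℂ) ^ (w - ((q : ℂ) + 1) / 2)

theorem measurableSet_beta :
    MeasurableSet {f : SymIdx q → ℝ | (symOfFun q f).PosDef ∧ (1 - symOfFun q f).PosDef} := by
  refine (measurableSet_posDef q).inter ?_
  have h : {f : SymIdx q → ℝ | (1 - symOfFun q f).PosDef} =
      (fun f => symCoord q 1 - f) ⁻¹' {f : SymIdx q → ℝ | (symOfFun q f).PosDef} := by
    ext f
    simp [symOfFun_sub, symOfFun_symCoord]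
  change MeasurableSet {f : SymIdx q → ℝ | (1 - symOfFun q f).PosDef}
  rw [h]
  exact measurableSet_preimage (by fun_prop) (measurableSet_posDef q)

theorem BetaOmega_eq (z w : ℂ) : BetaOmega q z w = ∫ f, betF q z w f := by
  unfold BetaOmega betF
  rw [setIntegral_symMeasure, integral_indicator (measurableSet_beta q)]
  rfl

theorem conv_eq (z w : ℂ) (u : SymIdx q → ℝ) :
    ∫ f, gamF q z f * gamF q w (u - f) = BetaOmega q z w * gamF q (z + w) u := by
  by_cases hu : (symOfFun q u).PosDef
  · obtain ⟨A, hA, hd⟩ := exists_factor q hu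
    have hmeas : Measurable fun f => gamF q z f * gamF q w (u - f) :=
      (measurable_gamF q z).mul ((measurable_gamF q w).comp (by fun_prop))
    rw [integral_conjLin q A hd _ hmeas, BetaOmega_eq, mul_comm (∫ f, betF q z w f),
      ← integral_const_mul, ← integral_const_mul]
    refine integral_congr_ae (Filter.Eventually.of_forall fun f => ?_)
    have hu' : symOfFun q (u - conjLin q A f) = A * (1 - symOfFun q f) * Aᵀ := by
      rw [symOfFun_sub, symOfFun_conjLin, hA]
      simp [Matrix.mul_sub, Matrix.sub_mul]
    have hgu : gamF q (z + w) u = Complex.exp (-((symOfFun q u).trace : ℂ)) *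
      (((symOfFun q u).det : ℝ) : ℂ) ^ (z + w - ((q : ℂ) + 1) / 2) :=
      Set.indicator_of_mem (s := {f : SymIdx q → ℝ | (symOfFun q f).PosDef}) hu _
    by_cases h1 : (symOfFun q f).PosDef ∧ (1 - symOfFun q f).PosDef
    · have hb : betF q z w f = _ := Set.indicator_of_mem
        (s := {f : SymIdx q → ℝ | (symOfFun q f).PosDef ∧ (1 - symOfFun q f).PosDef}) h1 _
      have hg1 : gamF q z (conjLin q A f) = _ := Set.indicator_of_mem
        (s := {f : SymIdx q → ℝ | (symOfFun q f).PosDef})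
        (by change (symOfFun q (conjLin q A f)).PosDef
            rw [symOfFun_conjLin, posDef_congr q _ _ hd]; exact h1.1) _
      have hg2 : gamF q w (u - conjLin q A f) = _ := Set.indicator_of_mem
        (s := {f : SymIdx q → ℝ | (symOfFun q f).PosDef})
        (by change (symOfFun q (u - conjLin q A f)).PosDef
            rw [hu', posDef_congr q _ _ hd]; exact h1.2) _
      simp only []
      rw [hb, hg1, hg2, hgu]
      have hdet1 : (symOfFun q (conjLin q A f)).det = (symOfFun q u).det * (symOfFun q f).det := by
        rw [symOfFun_conjLin, hA]; simp only [Matrix.det_mul]; ring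
      have hdet2 : (symOfFun q (u - conjLin q A f)).det =
          (symOfFun q u).det * (1 - symOfFun q f).det := by
        rw [hu', hA]; simp only [Matrix.det_mul]; ring
      have hdetu : ((|A.det| ^ (q + 1) : ℝ) : ℂ) =
          (((symOfFun q u).det : ℝ) : ℂ) ^ (((q : ℂ) + 1) / 2) := by
        have e1 : (symOfFun q u).det = |A.det| ^ 2 := by
          rw [hA, Matrix.det_mul, Matrix.det_transpose, sq_abs, sq]
        have e2 : ((q : ℂ) + 1) / 2 = ((((q : ℝ) + 1) / 2 : ℝ) : ℂ) := by push_cast; rfl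
        rw [e2, ← Complex.ofReal_cpow hu.det_pos.le, e1, ← Real.rpow_natCast, ← Real.rpow_natCast,
          ← Real.rpow_mul (abs_nonneg _)]
        congr 2
        push_cast
        ring
      have htr : (symOfFun q (u - conjLin q A f)).trace =
          (symOfFun q u).trace - (symOfFun q (conjLin q A f)).trace := by
        rw [symOfFun_sub, Matrix.trace_sub]
      rw [hdet1, hdet2, hdetu, htr]
      have hpu : (((symOfFun q u).det : ℝ) : ℂ) ≠ 0 := by exact_mod_cast hu.det_pos.ne'
      rw [Complex.ofReal_mul, Complex.ofReal_mul,
        Complex.mul_cpow_ofReal_nonneg hu.det_pos.le h1.1.det_pos.le,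
        Complex.mul_cpow_ofReal_nonneg hu.det_pos.le h1.2.det_pos.le]
      have hexp : z + w - ((q : ℂ) + 1) / 2 = ((q : ℂ) + 1) / 2 + (z - ((q : ℂ) + 1) / 2)
        + (w - ((q : ℂ) + 1) / 2) := by ring
      rw [hexp, Complex.cpow_add _ _ hpu, Complex.cpow_add _ _ hpu]
      have hexp2 : Complex.exp (-((symOfFun q u).trace : ℂ)) =
          Complex.exp (-((symOfFun q (conjLin q A f)).trace : ℂ)) *
          Complex.exp (-(((symOfFun q u).trace - (symOfFun q (conjLin q A f)).trace : ℝ) : ℂ)) := by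
        rw [← Complex.exp_add]; congr 1; push_cast; ring
      rw [hexp2]
      ring
    · have hb : betF q z w f = 0 := Set.indicator_of_notMem
        (s := {f : SymIdx q → ℝ | (symOfFun q f).PosDef ∧ (1 - symOfFun q f).PosDef}) h1 _
      have : gamF q z (conjLin q A f) * gamF q w (u - conjLin q A f) = 0 := by
        rw [mul_eq_zero]
        by_contra! hne
        have a1 := Set.mem_of_indicator_ne_zero hne.1
        have a2 := Set.mem_of_indicator_ne_zero hne.2
        change (symOfFun q (conjLin q A f)).PosDef at a1
        change (symOfFun q (u - conjLin q A f)).PosDef at a2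
        rw [symOfFun_conjLin, posDef_congr q _ _ hd] at a1
        rw [hu', posDef_congr q _ _ hd] at a2
        exact h1 ⟨a1, a2⟩
      simp only []
      rw [hb, this]; simp
  · have hgu : gamF q (z + w) u = 0 :=
      Set.indicator_of_notMem (s := {f : SymIdx q → ℝ | (symOfFun q f).PosDef}) hu _
    rw [hgu, mul_zero]
    refine integral_eq_zero_of_ae (Filter.Eventually.of_forall fun f => ?_)
    change gamF q z f * gamF q w (u - f) = 0
    rw [mul_eq_zero]
    by_contra! hne
    have a1 := Set.mem_of_indicator_ne_zero hne.1
    have a2 := Set.mem_of_indicator_ne_zero hne.2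
    change (symOfFun q f).PosDef at a1
    change (symOfFun q (u - f)).PosDef at a2
    apply hu
    have := a1.add a2
    rw [symOfFun_sub] at this
    simpa using this

theorem gamma_mul_gamma (z w : ℂ) (hz : Integrable (gamF q z)) (hw : Integrable (gamF q w)) :
    GammaOmega q z * GammaOmega q w = BetaOmega q z w * GammaOmega q (z + w) := by
  have h := integral_convolution (ContinuousLinearMap.mul ℝ ℂ) hz hw
  simp only [ContinuousLinearMap.mul_apply', convolution] at h
  rw [GammaOmega_eq, GammaOmega_eq, ← h, GammaOmega_eq, ← integral_const_mul]
  exact integral_congr_ae (Filter.Eventually.of_forall fun u => conv_eq q z w u)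

end Beta

section Gaussian

theorem integrable_gauss_std :
    Integrable (fun y : Fin q → ℝ => Real.exp (-(y ⬝ᵥ y))) := by
  have h : (fun y : Fin q → ℝ => Real.exp (-(y ⬝ᵥ y))) =
      fun y => ∏ i, (fun x : ℝ => Real.exp (-1 * x ^ 2)) (y i) := by
    ext y
    rw [← Real.exp_sum]
    simp [dotProduct, sq]
  rw [h]
  exact Integrable.fintype_prod (f := fun (_ : Fin q) (x : ℝ) => Real.exp (-1 * x ^ 2))
    (fun i => integrable_exp_neg_mul_sq one_pos)

theorem integral_gauss_std :
    ∫ y : Fin q → ℝ, Real.exp (-(y ⬝ᵥ y)) = (√Real.pi) ^ q := by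
  have h : (fun y : Fin q → ℝ => Real.exp (-(y ⬝ᵥ y))) =
      fun y => ∏ i, (fun x : ℝ => Real.exp (-1 * x ^ 2)) (y i) := by
    ext y
    rw [← Real.exp_sum]
    simp [dotProduct, sq]
  rw [h, integral_fintype_prod_volume_eq_pow (fun x : ℝ => Real.exp (-1 * x ^ 2)),
    integral_gaussian]
  simp

theorem gauss_aux {A : Matrix (Fin q) (Fin q) ℝ} (hA : A.PosDef) :
    Integrable (fun b : Fin q → ℝ => Real.exp (-(b ⬝ᵥ A⁻¹ *ᵥ b))) ∧
    ∫ b : Fin q → ℝ, Real.exp (-(b ⬝ᵥ A⁻¹ *ᵥ b)) = (√Real.pi) ^ q * √A.det := by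
  obtain ⟨B, hB, hd⟩ := exists_factor q hA
  have hd0 : LinearMap.det (Matrix.toLin' B) ≠ 0 := by rwa [LinearMap.det_toLin']
  have hm := Measure.map_linearMap_addHaar_eq_smul_addHaar
    (volume : Measure (Fin q → ℝ)) hd0
  have hmeas : Measurable (Matrix.toLin' B) :=
    (LinearMap.continuous_of_finiteDimensional (Matrix.toLin' B)).measurable
  have hg : Continuous (fun b : Fin q → ℝ => Real.exp (-(b ⬝ᵥ A⁻¹ *ᵥ b))) := by
    refine Real.continuous_exp.comp (Continuous.neg ?_)
    exact continuous_id.dotProduct (continuous_const.matrix_mulVec continuous_id)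
  have hcomp : ∀ y, Real.exp (-((Matrix.toLin' B y) ⬝ᵥ A⁻¹ *ᵥ (Matrix.toLin' B y)))
      = Real.exp (-(y ⬝ᵥ y)) := by
    intro y
    congr 2
    have hBu : IsUnit B.det := hd.isUnit
    have hBtu : IsUnit Bᵀ.det := by rw [Matrix.det_transpose]; exact hBu
    rw [Matrix.toLin'_apply, Matrix.mulVec_mulVec, hB, Matrix.mul_inv_rev, Matrix.mul_assoc,
      Matrix.nonsing_inv_mul _ hBu, Matrix.mul_one, ← Matrix.vecMul_transpose,
      ← Matrix.dotProduct_mulVec, Matrix.mulVec_mulVec, Matrix.mul_nonsing_inv _ hBtu,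
      Matrix.one_mulVec]
  have hdet : |B.det| = √A.det := by
    rw [hB, Matrix.det_mul, Matrix.det_transpose, Real.sqrt_mul_self_eq_abs]
  constructor
  · have h1 : Integrable (fun b : Fin q → ℝ => Real.exp (-(b ⬝ᵥ A⁻¹ *ᵥ b)))
        (Measure.map (Matrix.toLin' B) volume) := by
      rw [integrable_map_measure hg.aestronglyMeasurable hmeas.aemeasurable]
      refine (integrable_gauss_std q).congr (Filter.Eventually.of_forall fun y => ?_)
      exact (hcomp y).symm
    rw [hm, integrable_smul_measure _ ENNReal.ofReal_ne_top] at h1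
    · exact h1
    · simp [hd]
  · have h1 : ∫ b : Fin q → ℝ, Real.exp (-(b ⬝ᵥ A⁻¹ *ᵥ b)) ∂(Measure.map (Matrix.toLin' B) volume)
        = (√Real.pi) ^ q := by
      rw [integral_map hmeas.aemeasurable hg.aestronglyMeasurable, ← integral_gauss_std q]
      exact integral_congr_ae (Filter.Eventually.of_forall hcomp)
    rw [hm, integral_smul_measure, LinearMap.det_toLin', abs_inv,
      ENNReal.toReal_ofReal (by positivity), smul_eq_mul, hdet] at h1
    have : √A.det ≠ 0 := by rw [← hdet]; exact abs_ne_zero.mpr hd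
    rw [← h1]; field_simp

end Gaussian

section Gindikin

/-- index map for the block decomposition -/
def idxMap : (SymIdx q ⊕ Fin q) ⊕ Unit → SymIdx (q + 1)
  | .inl (.inl p) => ⟨(p.1.1.castSucc, p.1.2.castSucc), by
      simpa using p.2⟩
  | .inl (.inr i) => ⟨(i.castSucc, Fin.last q), Fin.le_last _⟩
  | .inr _ => ⟨(Fin.last q, Fin.last q), le_rfl⟩

theorem idxMap_bij : Function.Bijective (idxMap q) := by
  constructor
  · rintro ((⟨⟨a, b⟩, h⟩ | i) | _) ((⟨⟨c, d⟩, h'⟩ | j) | _) hh <;>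
      simp_all [idxMap, Fin.ext_iff] <;> omega
  · rintro ⟨⟨i, j⟩, h⟩
    induction i using Fin.lastCases with
    | last =>
      have : j = Fin.last q := le_antisymm (Fin.le_last _) h
      subst this
      exact ⟨.inr (), rfl⟩
    | cast i =>
      induction j using Fin.lastCases with
      | last => exact ⟨.inl (.inr i), rfl⟩
      | cast j => exact ⟨.inl (.inl ⟨(i, j), by simpa using h⟩), rfl⟩

/-- index equivalence for the block decomposition -/
noncomputable def idxEquiv : (SymIdx q ⊕ Fin q) ⊕ Unit ≃ SymIdx (q + 1) :=
  Equiv.ofBijective (idxMap q) (idxMap_bij q)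

/-- gluing the blocks -/
noncomputable def glue (x : ((SymIdx q → ℝ) × (Fin q → ℝ)) × ℝ) : SymIdx (q + 1) → ℝ :=
  fun p => Sum.elim (Sum.elim x.1.1 x.1.2) (fun _ => x.2) ((idxEquiv q).symm p)

theorem glue_idxMap (x : ((SymIdx q → ℝ) × (Fin q → ℝ)) × ℝ) (k) :
    glue q x (idxMap q k) = Sum.elim (Sum.elim x.1.1 x.1.2) (fun _ => x.2) k := by
  unfold glue
  rw [show idxMap q k = idxEquiv q k from rfl, Equiv.symm_apply_apply]

theorem measurePreserving_glue : MeasurePreserving (glue q) volume volume := by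
  have h1 := volume_measurePreserving_piCongrLeft (fun _ : SymIdx (q + 1) => ℝ) (idxEquiv q)
  have h2 := volume_measurePreserving_sumPiEquivProdPi_symm
    (fun _ : (SymIdx q ⊕ Fin q) ⊕ Unit => ℝ)
  have h3 := volume_measurePreserving_sumPiEquivProdPi_symm
    (fun _ : SymIdx q ⊕ Fin q => ℝ)
  have h4 := (volume_preserving_funUnique Unit ℝ).symm
  have h5 := h1.comp (h2.comp (h3.prod h4))
  have heq : glue q = (MeasurableEquiv.piCongrLeft (fun _ : SymIdx (q + 1) => ℝ) (idxEquiv q)) ∘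
      (MeasurableEquiv.sumPiEquivProdPi (fun _ : (SymIdx q ⊕ Fin q) ⊕ Unit => ℝ)).symm ∘
      Prod.map (MeasurableEquiv.sumPiEquivProdPi (fun _ : SymIdx q ⊕ Fin q => ℝ)).symm
        (MeasurableEquiv.funUnique Unit ℝ).symm := by
    funext x
    funext p
    obtain ⟨k, rfl⟩ := (idxEquiv q).surjective p
    rw [show idxEquiv q k = idxMap q k from rfl, glue_idxMap]
    simp only [Function.comp_apply]
    rw [show idxMap q k = idxEquiv q k from rfl, MeasurableEquiv.coe_piCongrLeft,
      Equiv.piCongrLeft_apply_apply]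
    rcases k with (k | k) | k <;> rfl
  rw [heq]
  exact h5

theorem symOfFun_glue (x : ((SymIdx q → ℝ) × (Fin q → ℝ)) × ℝ) :
    (symOfFun (q + 1) (glue q x)).submatrix (finSumFinEquiv (m := q) (n := 1))
      (finSumFinEquiv (m := q) (n := 1)) =
    Matrix.fromBlocks (symOfFun q x.1.1) (Matrix.replicateCol (Fin 1) x.1.2)
      (Matrix.replicateCol (Fin 1) x.1.2)ᴴ (Matrix.of fun _ _ => x.2) := by
  have key : ∀ (i j : Fin (q + 1)) (h : i ≤ j),
      symOfFun (q + 1) (glue q x) i j = glue q x ⟨(i, j), h⟩ := fun i j h => dif_pos h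
  have hlast : ∀ k : Fin 1, (finSumFinEquiv (m := q) (n := 1)) (Sum.inr k) = Fin.last q := by
    intro k; ext; simp
  have hcast : ∀ k : Fin q, (finSumFinEquiv (m := q) (n := 1)) (Sum.inl k) = k.castSucc := by
    intro k; rfl
  have h12 : ∀ i : Fin q, symOfFun (q + 1) (glue q x) i.castSucc (Fin.last q) = x.1.2 i := by
    intro i
    rw [key _ _ (Fin.le_last _)]
    exact glue_idxMap q x (.inl (.inr i))
  have h11 : ∀ i j : Fin q, i ≤ j → symOfFun (q + 1) (glue q x) i.castSucc j.castSucc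
      = symOfFun q x.1.1 i j := by
    intro i j h
    rw [key _ _ (by simpa using h), show symOfFun q x.1.1 i j = x.1.1 ⟨(i, j), h⟩ from dif_pos h]
    exact glue_idxMap q x (.inl (.inl ⟨(i, j), h⟩))
  ext (i | i) (j | j)
  · rw [Matrix.submatrix_apply, hcast, hcast, Matrix.fromBlocks_apply₁₁]
    rcases le_total i j with h | h
    · exact h11 i j h
    · rw [symOfFun_symm, symOfFun_symm q, h11 j i h]
  · rw [Matrix.submatrix_apply, hcast, hlast, Matrix.fromBlocks_apply₁₂, h12]
    rfl
  · rw [Matrix.submatrix_apply, hcast, hlast, Matrix.fromBlocks_apply₂₁, symOfFun_symm, h12]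
    simp
  · rw [Matrix.submatrix_apply, hlast, hlast, Matrix.fromBlocks_apply₂₂, key _ _ le_rfl]
    exact glue_idxMap q x (.inr ())

/-- the quadratic form of the Schur complement -/
noncomputable def quadF (y : (SymIdx q → ℝ) × (Fin q → ℝ)) : ℝ :=
  y.2 ⬝ᵥ (symOfFun q y.1)⁻¹ *ᵥ y.2

theorem measurable_quadF : Measurable (quadF q) := by
  have h : quadF q = fun y => ((symOfFun q y.1).det)⁻¹ *
      (y.2 ⬝ᵥ (symOfFun q y.1).adjugate *ᵥ y.2) := by
    ext y
    unfold quadF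
    rw [Matrix.inv_def, Ring.inverse_eq_inv', Matrix.smul_mulVec, dotProduct_smul, smul_eq_mul]
  rw [h]
  have hc : Continuous fun y : (SymIdx q → ℝ) × (Fin q → ℝ) => symOfFun q y.1 :=
    (continuous_symOfFun q).comp continuous_fst
  refine Measurable.mul (hc.matrix_det.measurable.inv) (Continuous.measurable ?_)
  exact continuous_snd.dotProduct (hc.matrix_adjugate.matrix_mulVec continuous_snd)

theorem schur_eq (x : ((SymIdx q → ℝ) × (Fin q → ℝ)) × ℝ) :
    (Matrix.of fun _ _ => x.2) - (Matrix.replicateCol (Fin 1) x.1.2)ᴴ * (symOfFun q x.1.1)⁻¹ *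
      (Matrix.replicateCol (Fin 1) x.1.2) = Matrix.diagonal fun _ : Fin 1 => x.2 - quadF q x.1 := by
  ext i j
  fin_cases i; fin_cases j
  simp [quadF, Matrix.mul_assoc, Matrix.mul_apply, dotProduct, Matrix.mulVec]

theorem trace_glue (x : ((SymIdx q → ℝ) × (Fin q → ℝ)) × ℝ) :
    (symOfFun (q + 1) (glue q x)).trace = (symOfFun q x.1.1).trace + x.2 := by
  have h := congrArg Matrix.trace (symOfFun_glue q x)
  have h2 : ((symOfFun (q + 1) (glue q x)).submatrix (finSumFinEquiv (m := q) (n := 1))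
      (finSumFinEquiv (m := q) (n := 1))).trace = (symOfFun (q + 1) (glue q x)).trace := by
    simp only [Matrix.trace, Matrix.diag, Matrix.submatrix_apply]
    exact Equiv.sum_comp (finSumFinEquiv (m := q) (n := 1))
      (fun i => symOfFun (q + 1) (glue q x) i i)
  rw [← h2, h]
  simp [Matrix.trace, Fintype.sum_sum_type]

theorem det_glue (x : ((SymIdx q → ℝ) × (Fin q → ℝ)) × ℝ) (hA : (symOfFun q x.1.1).PosDef) :
    (symOfFun (q + 1) (glue q x)).det = (symOfFun q x.1.1).det * (x.2 - quadF q x.1) := by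
  have := hA.isUnit.invertible
  rw [← Matrix.det_submatrix_equiv_self (finSumFinEquiv (m := q) (n := 1)), symOfFun_glue,
    Matrix.det_fromBlocks₁₁, Matrix.invOf_eq_nonsing_inv, schur_eq, Matrix.det_diagonal]
  simp

theorem posDef_glue (x : ((SymIdx q → ℝ) × (Fin q → ℝ)) × ℝ) :
    (symOfFun (q + 1) (glue q x)).PosDef ↔
      (symOfFun q x.1.1).PosDef ∧ 0 < x.2 - quadF q x.1 := by
  have hsub : (symOfFun (q + 1) (glue q x)).PosDef → (symOfFun q x.1.1).PosDef := by
    intro h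
    have h2 := h.submatrix (e := fun i : Fin q => i.castSucc) (Fin.castSucc_injective q)
    convert h2 using 1
    ext i j
    have := congrFun (congrFun (symOfFun_glue q x) (Sum.inl i)) (Sum.inl j)
    exact this.symm
  constructor
  · intro h
    have hA := hsub h
    refine ⟨hA, ?_⟩
    have h1 := h.det_pos
    rw [det_glue q x hA] at h1
    exact (mul_pos_iff_of_pos_left hA.det_pos).mp h1
  · rintro ⟨hA, ht⟩
    have := hA.isUnit.invertible
    have hps : (symOfFun (q + 1) (glue q x)).PosSemidef := by
      rw [← Matrix.posSemidef_submatrix_equiv (finSumFinEquiv (m := q) (n := 1)), symOfFun_glue,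
        hA.fromBlocks₁₁, schur_eq, Matrix.posSemidef_diagonal_iff]
      exact fun _ => ht.le
    rw [hps.posDef_iff_det_ne_zero, det_glue q x hA]
    exact mul_ne_zero hA.det_pos.ne' ht.ne'

/-- shear followed by gluing -/
noncomputable def shearGlue (x : ((SymIdx q → ℝ) × (Fin q → ℝ)) × ℝ) : SymIdx (q + 1) → ℝ :=
  glue q (x.1, x.2 + quadF q x.1)

theorem measurePreserving_shearGlue : MeasurePreserving (shearGlue q) volume volume := by
  have h : MeasurePreserving (fun x : ((SymIdx q → ℝ) × (Fin q → ℝ)) × ℝ =>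
      (x.1, x.2 + quadF q x.1)) (volume.prod volume) (volume.prod volume) := by
    refine MeasurePreserving.skew_product (f := id) (g := fun y t => t + quadF q y)
      (MeasurePreserving.id _) ?_ ?_
    · exact measurable_snd.add ((measurable_quadF q).comp measurable_fst)
    · exact Filter.Eventually.of_forall fun y => map_add_right_eq_self _ _
  exact (measurePreserving_glue q).comp h

/-- the part of the integrand depending on `A` -/
noncomputable def partK (s : ℂ) : (SymIdx q → ℝ) → ℂ :=
  {f : SymIdx q → ℝ | (symOfFun q f).PosDef}.indicator fun f =>
    Complex.exp (-((symOfFun q f).trace : ℂ)) * (((symOfFun q f).det : ℝ) : ℂ) ^ s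

theorem partK_eq (s : ℂ) : partK q s = gamF q (s + ((q : ℂ) + 1) / 2) := by
  unfold partK gamF; simp

/-- the scalar gamma integrand -/
noncomputable def partH (s : ℂ) : ℝ → ℂ :=
  (Set.Ioi (0 : ℝ)).indicator fun t => ((Real.exp (-t) : ℝ) : ℂ) * (t : ℂ) ^ s

theorem gamF_shearGlue (z : ℂ) (x : ((SymIdx q → ℝ) × (Fin q → ℝ)) × ℝ) :
    gamF (q + 1) z (shearGlue q x) =
      (partK q (z - ((q : ℂ) + 2) / 2) x.1.1 * ((Real.exp (-quadF q x.1) : ℝ) : ℂ)) *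
        partH (z - ((q : ℂ) + 2) / 2) x.2 := by
  have hpd := posDef_glue q (x.1, x.2 + quadF q x.1)
  simp only [add_sub_cancel_right] at hpd
  by_cases hA : (symOfFun q x.1.1).PosDef
  · have hK : partK q (z - ((q : ℂ) + 2) / 2) x.1.1 = _ := Set.indicator_of_mem
        (s := {f : SymIdx q → ℝ | (symOfFun q f).PosDef}) hA _
    by_cases ht : 0 < x.2
    · have hH : partH (z - ((q : ℂ) + 2) / 2) x.2 = _ := Set.indicator_of_mem
        (s := Set.Ioi (0 : ℝ)) ht _
      have hG : gamF (q + 1) z (shearGlue q x) = _ := Set.indicator_of_mem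
        (s := {f : SymIdx (q + 1) → ℝ | (symOfFun (q + 1) f).PosDef}) (hpd.mpr ⟨hA, ht⟩) _
      rw [hK, hH, hG]
      have hd := det_glue q (x.1, x.2 + quadF q x.1) hA
      have htr := trace_glue q (x.1, x.2 + quadF q x.1)
      simp only [add_sub_cancel_right] at hd htr
      change cexp (-((symOfFun (q + 1) (glue q (x.1, x.2 + quadF q x.1))).trace : ℂ)) *
        (((symOfFun (q + 1) (glue q (x.1, x.2 + quadF q x.1))).det : ℝ) : ℂ) ^ _ = _
      rw [hd, htr, Complex.ofReal_mul, Complex.mul_cpow_ofReal_nonneg hA.det_pos.le ht.le]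
      have he : cexp (-(((symOfFun q x.1.1).trace + (x.2 + quadF q x.1) : ℝ) : ℂ)) =
          cexp (-((symOfFun q x.1.1).trace : ℂ)) * ((Real.exp (-quadF q x.1) : ℝ) : ℂ) *
          ((Real.exp (-x.2) : ℝ) : ℂ) := by
        rw [Complex.ofReal_exp, Complex.ofReal_exp, ← Complex.exp_add, ← Complex.exp_add]
        congr 1; push_cast; ring
      have hs : z - (((q + 1 : ℕ) : ℂ) + 1) / 2 = z - ((q : ℂ) + 2) / 2 := by
        push_cast; ring
      rw [he, hs]
      ring
    · have hH : partH (z - ((q : ℂ) + 2) / 2) x.2 = 0 := Set.indicator_of_notMem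
        (s := Set.Ioi (0 : ℝ)) ht _
      have hG : gamF (q + 1) z (shearGlue q x) = 0 := Set.indicator_of_notMem
        (s := {f : SymIdx (q + 1) → ℝ | (symOfFun (q + 1) f).PosDef})
        (fun h => ht (hpd.mp h).2) _
      rw [hH, hG, mul_zero]
  · have hK : partK q (z - ((q : ℂ) + 2) / 2) x.1.1 = 0 := Set.indicator_of_notMem
        (s := {f : SymIdx q → ℝ | (symOfFun q f).PosDef}) hA _
    have hG : gamF (q + 1) z (shearGlue q x) = 0 := Set.indicator_of_notMem
        (s := {f : SymIdx (q + 1) → ℝ | (symOfFun (q + 1) f).PosDef})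
        (fun h => hA (hpd.mp h).1) _
    rw [hK, hG, zero_mul, zero_mul]

theorem partH_facts (s : ℂ) (hs : 0 < (s + 1).re) :
    Integrable (partH s) ∧ ∫ t, partH s t = Complex.Gamma (s + 1) := by
  have h1 := Complex.GammaIntegral_convergent hs
  simp only [add_sub_cancel_right] at h1
  constructor
  · exact (integrable_indicator_iff measurableSet_Ioi).mpr h1
  · unfold partH
    rw [integral_indicator measurableSet_Ioi, Complex.Gamma_eq_integral hs, Complex.GammaIntegral]
    simp

theorem partK_sqrt (s : ℂ) (f : SymIdx q → ℝ) :
    partK q s f * ((√(symOfFun q f).det : ℝ) : ℂ) = partK q (s + 1 / 2) f := by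
  by_cases hA : (symOfFun q f).PosDef
  · have h1 : ∀ s, partK q s f = cexp (-((symOfFun q f).trace : ℂ)) *
        (((symOfFun q f).det : ℝ) : ℂ) ^ s := fun s => Set.indicator_of_mem
        (s := {f : SymIdx q → ℝ | (symOfFun q f).PosDef}) hA _
    have hne : (((symOfFun q f).det : ℝ) : ℂ) ≠ 0 := by exact_mod_cast hA.det_pos.ne'
    rw [h1, h1, Complex.cpow_add _ _ hne, Real.sqrt_eq_rpow, Complex.ofReal_cpow hA.det_pos.le]
    push_cast
    ring
  · have h1 : ∀ s, partK q s f = 0 := fun s => Set.indicator_of_notMem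
        (s := {f : SymIdx q → ℝ | (symOfFun q f).PosDef}) hA _
    rw [h1, h1, zero_mul]

theorem partG_facts (s : ℂ) (hs : Integrable (partK q (s + 1 / 2))) :
    Integrable (fun y : (SymIdx q → ℝ) × (Fin q → ℝ) =>
      partK q s y.1 * ((Real.exp (-quadF q y) : ℝ) : ℂ)) ∧
    ∫ y : (SymIdx q → ℝ) × (Fin q → ℝ), partK q s y.1 * ((Real.exp (-quadF q y) : ℝ) : ℂ) =
      ((√Real.pi) ^ q : ℝ) * ∫ f, partK q (s + 1 / 2) f := by
  have hKm : Measurable (partK q s) := by rw [partK_eq]; exact measurable_gamF q _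
  have hmeas : Measurable (fun y : (SymIdx q → ℝ) × (Fin q → ℝ) =>
      partK q s y.1 * ((Real.exp (-quadF q y) : ℝ) : ℂ)) := by
    have := measurable_quadF q
    fun_prop
  have hK0 : ∀ f, ¬ (symOfFun q f).PosDef → partK q s f = 0 := fun f hA =>
    Set.indicator_of_notMem (s := {f : SymIdx q → ℝ | (symOfFun q f).PosDef}) hA _
  have hint : Integrable (fun y : (SymIdx q → ℝ) × (Fin q → ℝ) =>
      partK q s y.1 * ((Real.exp (-quadF q y) : ℝ) : ℂ)) (volume.prod volume) := by
    rw [integrable_prod_iff hmeas.aestronglyMeasurable]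
    constructor
    · refine Filter.Eventually.of_forall fun f => ?_
      by_cases hA : (symOfFun q f).PosDef
      · have hr : Integrable (fun b : Fin q → ℝ => ((Real.exp (-quadF q (f, b)) : ℝ) : ℂ)) :=
          (gauss_aux q hA).1.ofReal
        exact hr.const_mul (partK q s f)
      · simp [hK0 f hA]
    · refine (hs.norm.const_mul ((√Real.pi) ^ q)).congr (Filter.Eventually.of_forall fun f => ?_)
      simp only [norm_mul, Complex.norm_real, Real.norm_eq_abs, Real.abs_exp]
      rw [integral_const_mul]
      by_cases hA : (symOfFun q f).PosDef
      · have := (gauss_aux q hA).2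
        simp only [quadF]
        rw [this, ← partK_sqrt, norm_mul, Complex.norm_real, Real.norm_eq_abs,
          abs_of_nonneg (Real.sqrt_nonneg _)]
        ring
      · rw [← partK_sqrt, hK0 f hA]; simp
  refine ⟨hint, ?_⟩
  rw [Measure.volume_eq_prod, integral_prod _ hint, ← integral_const_mul]
  refine integral_congr_ae (Filter.Eventually.of_forall fun f => ?_)
  simp only []
  rw [integral_const_mul, integral_complex_ofReal]
  by_cases hA : (symOfFun q f).PosDef
  · have := (gauss_aux q hA).2
    simp only [quadF]
    rw [this, ← partK_sqrt]
    push_cast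
    ring
  · rw [← partK_sqrt, hK0 f hA]; simp

theorem gamF_facts (z : ℂ) (hz : z.re > ((q : ℝ) - 1) / 2) :
    Integrable (gamF q z) ∧ ∫ f, gamF q z f ≠ 0 := by
  induction q generalizing z with
  | zero =>
    have h : gamF 0 z = fun _ => 1 := by
      ext f
      have hA : (symOfFun 0 f).PosDef := by
        rw [Subsingleton.elim (symOfFun 0 f) 1]; exact Matrix.PosDef.one
      have := Set.indicator_of_mem (s := {f : SymIdx 0 → ℝ | (symOfFun 0 f).PosDef}) hA
        (fun f => Complex.exp (-((symOfFun 0 f).trace : ℂ)) *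
      (((symOfFun 0 f).det : ℝ) : ℂ) ^ (z - (((0 : ℕ) : ℂ) + 1) / 2))
      refine this.trans ?_
      simp [Matrix.trace]
    rw [h]
    have hv : (volume : Measure (SymIdx 0 → ℝ)) = Measure.dirac (fun _ => 0) := by
      rw [volume_pi]; exact Measure.pi_of_empty _ _
    rw [hv]
    constructor
    · exact integrable_const _
    · simp
  | succ q ih =>
    have hz' : z.re > (q : ℝ) / 2 := by
      push_cast at hz; linarith
    have h0 := ih z (by linarith)
    have hK : partK q (z - ((q : ℂ) + 2) / 2 + 1 / 2) = gamF q z := by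
      rw [partK_eq]; congr 1; ring
    have hH := partH_facts (z - ((q : ℂ) + 2) / 2) (by
      have : (z - ((q : ℂ) + 2) / 2 + 1) = z - (((q : ℝ) / 2 : ℝ) : ℂ) := by push_cast; ring
      rw [this, Complex.sub_re, Complex.ofReal_re]; linarith)
    have hG := partG_facts q (z - ((q : ℂ) + 2) / 2) (by rw [hK]; exact h0.1)
    have hmp := measurePreserving_shearGlue q
    have hm := measurable_gamF (q + 1) z
    constructor
    · rw [← hmp.integrable_comp hm.aestronglyMeasurable]
      have := hG.1.mul_prod hH.1
      refine this.congr (Filter.Eventually.of_forall fun x => ?_)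
      exact (gamF_shearGlue q z x).symm
    · rw [← hmp.map_eq, integral_map hmp.measurable.aemeasurable hm.aestronglyMeasurable]
      simp_rw [gamF_shearGlue]
      rw [Measure.volume_eq_prod, integral_prod_mul (fun y : (SymIdx q → ℝ) × (Fin q → ℝ) =>
        partK q (z - ((q : ℂ) + 2) / 2) y.1 * ((Real.exp (-quadF q y) : ℝ) : ℂ)), hG.2, hH.2, hK]
      refine mul_ne_zero (mul_ne_zero ?_ h0.2) ?_
      · exact_mod_cast pow_ne_zero _ (Real.sqrt_pos.mpr Real.pi_pos).ne'
      · apply Complex.Gamma_ne_zero_of_re_pos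
        have : (z - ((q : ℂ) + 2) / 2 + 1) = z - (((q : ℝ) / 2 : ℝ) : ℂ) := by push_cast; ring
        rw [this, Complex.sub_re, Complex.ofReal_re]; linarith

end Gindikin

/-- For `Re z, Re w > (q-1)/2`, the beta function of the cone of positive definite real
symmetric matrices satisfies `B_Ω(z,w) = Γ_Ω(z)Γ_Ω(w)/Γ_Ω(z+w)`. -/
theorem stmt_6 (hq : 1 ≤ q) (z w : ℂ)
    (hz : z.re > ((q : ℝ) - 1) / 2) (hw : w.re > ((q : ℝ) - 1) / 2) :
    BetaOmega q z w = GammaOmega q z * GammaOmega q w / GammaOmega q (z + w) := by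
  have hz' := gamF_facts q z hz
  have hw' := gamF_facts q w hw
  have hq' : (1 : ℝ) ≤ q := by exact_mod_cast hq
  have hzw := gamF_facts q (z + w) (by rw [Complex.add_re]; linarith)
  rw [← GammaOmega_eq] at hzw
  rw [eq_div_iff hzw.2, gamma_mul_gamma q z w hz'.1 hw'.1]
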